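/- Upper bound for the slow-player marker game: for every v ∈ (0,1] there is a strategy (f, z, g) with drop time z = 1/(v+3) whose four rendezvous times, arranged in increasing order, are exactly 3/(v+3), (5v+3)/((v+1)(v+3)), (7v²+12v+9)/((v+1)²(v+3)), and (9v³+27v²+35v+9)/((v+1)³(v+3)); consequently Vm(v) ≤ (24v³+68v²+76v+24)/((v+1)³(v+3)) for every v ∈ (0,1]. In this strategy the slow player always moves at maximal speed, with direction pattern (−v, +v, −v, +v), and the marker is found by an agent exactly at the first rendezvous time 3/(v+3). -/

import Mathlib

/-!
With `z = 1/(v+3)`, player II uses `g t = t` up to time `3z` and then turns back for good, while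
player I zigzags at full speed `v`, starting to the left and turning at the times `z`, `3z`, `B`
and `C`, where `3z`, `B`, `C` (and finally `D`) are the rendezvous times.

* Agent `(1,-1)` walks straight to player I and meets it at `3z`, at position `vz`.
* Agent `(-1,1)` finds the marker (at `-vz`) exactly at time `3z`, so it keeps walking to the right
  while the others turn back, and is met at `B`, by player I who has just turned left.
* Agent `(1,1)`, on its way back to the left, is met at `C` by player I moving right.
* Agent `(-1,-1)`, on its way back to the right, walks over the marker at time `9z` (which does not
  change its motion) and is met at `D` by player I moving left.

`MeetingTimes` records the linear equations that say that the positions agree at these times, and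
derives their ordering. Each rendezvous time then follows from `rdvTime_eq`: the trajectories
agree at the claimed time, and before it the signed gap between them never vanishes, because on
each linear piece it is bounded below or is a positive multiple of the remaining time.
-/

open Set

/-- `PiecewiseLin S g` : `g` starts at `0` and is piecewise linear with finitely many
pieces, each slope belonging to `S` (the last piece extending to `+∞`). -/
def PiecewiseLin (S : Set ℝ) (g : ℝ → ℝ) : Prop :=
  g 0 = 0 ∧ ∃ (n : ℕ) (τ : ℕ → ℝ) (c : ℕ → ℝ),
    τ 0 = 0 ∧ (∀ i, i < n → τ i ≤ τ (i + 1)) ∧ (∀ i, i ≤ n → c i ∈ S) ∧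
    (∀ i, i < n → ∀ t, τ i ≤ t → t ≤ τ (i + 1) → g t = g (τ i) + c i * (t - τ i)) ∧
    (∀ t, τ n ≤ t → g t = g (τ n) + c n * (t - τ n))

/-- `AgentTraj f g z sAfter o b p` : `p` is the trajectory of the agent of player II
with starting point `o` and forward direction `b`, when player I moves along `f` and
drops a marker at position `f z` at time `z`, and player II's strategy is `g`. The agent
follows `o + b • g` until the first time `τ ≥ z` (if any, occurring before its rendezvous
with player I) at which it stands on the marker; from then on it moves at speed `sAfter`
in its direction of motion at time `τ⁻`. -/
def AgentTraj (f g : ℝ → ℝ) (z sAfter o b : ℝ) (p : ℝ → ℝ) : Prop :=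
  -- either the agent never finds the marker before its rendezvous and `p = o + b • g` …
  ((∀ t, p t = o + b * g t) ∧
    ¬∃ τ, z ≤ τ ∧ o + b * g τ = f z ∧ ∀ t, 0 ≤ t → t < τ → f t ≠ o + b * g t) ∨
  -- … or it finds the marker at time `τ`, before its rendezvous, and continues at
  -- speed `sAfter` in its direction `d` of motion at time `τ⁻` (of left slope `c`).
  ∃ τ c d, z ≤ τ ∧ o + b * g τ = f z ∧
    (∀ t, 0 ≤ t → t < τ → f t ≠ o + b * g t) ∧
    (∀ t, z ≤ t → t < τ → o + b * g t ≠ f z) ∧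
    (0 < τ → ∃ ε > 0, ∀ s, τ - ε ≤ s → s ≤ τ → o + b * g s = o + b * g τ + c * (s - τ)) ∧
    (d = sAfter ∨ d = -sAfter) ∧ (0 < c → d = sAfter) ∧ (c < 0 → d = -sAfter) ∧
    (∀ t, 0 ≤ t → t ≤ τ → p t = o + b * g t) ∧
    (∀ t, τ ≤ t → p t = o + b * g τ + d * (t - τ))

/-- The rendezvous time of player I (at `f`) with an agent moving along `p`. -/
noncomputable def rdvTime (f p : ℝ → ℝ) : ℝ := sInf {t | 0 ≤ t ∧ f t = p t}

/-- A full strategy profile for the marker game: player I plays a piecewise linear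
trajectory `f` with slopes in `Sf` and drops the marker at time `z ≥ 0`; player II plays
a piecewise linear `g` with slopes in `Sg`; `p o b` is the resulting trajectory of the
agent `(o, b)`, which moves at speed `sAfter` after finding the marker, and each of the
four rendezvous times is finite. -/
def MarkerProfile (Sf Sg : Set ℝ) (sAfter : ℝ) (f g : ℝ → ℝ) (z : ℝ)
    (p : ℝ → ℝ → ℝ → ℝ) : Prop :=
  PiecewiseLin Sf f ∧ PiecewiseLin Sg g ∧ 0 ≤ z ∧
    ∀ o b : ℝ, (o = 1 ∨ o = -1) → (b = 1 ∨ b = -1) →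
      AgentTraj f g z sAfter o b (p o b) ∧ {t | 0 ≤ t ∧ f t = p o b t}.Nonempty

/-- The sum of the four rendezvous times in the marker game. -/
noncomputable def markerSum (f : ℝ → ℝ) (p : ℝ → ℝ → ℝ → ℝ) : ℝ :=
  rdvTime f (p 1 1) + rdvTime f (p 1 (-1)) + rdvTime f (p (-1) 1) + rdvTime f (p (-1) (-1))

/-- The value of the marker game: infimum of the sum of the four rendezvous times. -/
noncomputable def markerValue (Sf Sg : Set ℝ) (sAfter : ℝ) : ℝ :=
  sInf {S | ∃ f g z p, MarkerProfile Sf Sg sAfter f g z p ∧ S = markerSum f p}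

/-- `Vm v` : value of the marker game where the slow player (speed bound `v`) holds the
marker and the fast player (speed bound `1`, always moving at full speed) searches. -/
noncomputable def Vm (v : ℝ) : ℝ := markerValue (Icc (-v) v) {-1, 1} 1

/-- `W v` : value of the marker game where the fast player (speed bound `1`) holds the
marker and the slow player (speed bound `v`) searches, moving at maximal speed `v` after
finding the marker. -/
noncomputable def W (v : ℝ) : ℝ := markerValue (Icc (-1) 1) (Icc (-v) v) v

/-! ### The strategy and its meeting times -/

/-- Player I's zigzag at speed `v`: left first, turning at times `z`, `3 * z`, `B` and `C`. -/
noncomputable def zigzag (v z B C t : ℝ) : ℝ :=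
  if t ≤ z then -v * t
  else if t ≤ 3 * z then -v * z + v * (t - z)
  else if t ≤ B then v * z - v * (t - 3 * z)
  else if t ≤ C then v * z - v * (B - 3 * z) + v * (t - B)
  else v * z - v * (B - 3 * z) + v * (C - B) - v * (t - C)

/-- Player II's strategy: forward at unit speed until time `3 * z`, then backward. -/
noncomputable def turnBack (z t : ℝ) : ℝ := if t ≤ 3 * z then t else 6 * z - t

/-- The trajectories of the four agents: only `(-1, 1)`, which finds the marker at the moment
`g` turns back, deviates from `o + b * g`; it keeps moving to the right. -/
noncomputable def agentPath (z o b t : ℝ) : ℝ :=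
  if o = -1 ∧ b = 1 then -1 + t else o + b * turnBack z t

/-- The relations between the drop time `z` and the rendezvous times `3 * z`, `B`, `C`, `D`:
`eqB`, `eqC`, `eqD` say that player I meets the agents `(-1, 1)`, `(1, 1)`, `(-1, -1)` at the
times `B`, `C`, `D` respectively. -/
structure MeetingTimes (v z B C D : ℝ) : Prop where
  v_pos : 0 < v
  v_le : v ≤ 1
  eqz : z * (v + 3) = 1
  eqB : -1 + B = v * z - v * (B - 3 * z)
  eqC : 1 + (6 * z - C) = v * z - v * (B - 3 * z) + v * (C - B)
  eqD : -1 - (6 * z - D) = v * z - v * (B - 3 * z) + v * (C - B) - v * (D - C)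

namespace MeetingTimes

variable {v z B C D : ℝ}

lemma z_pos (h : MeetingTimes v z B C D) : 0 < z := by
  have h1 := h.eqz
  have h2 := h.v_pos
  by_contra! hz
  nlinarith

lemma lt_B (h : MeetingTimes v z B C D) : 3 * z < B := by
  have hvz := mul_pos h.v_pos h.z_pos
  have h0 := h.v_pos
  -- `(1 + v) * (B - 3 * z) = 2 * v * z`
  have h1 : (1 + v) * (B - 3 * z) = 2 * (v * z) := by linarith [h.eqB, h.eqz]
  by_contra! hB
  nlinarith

lemma B_le (h : MeetingTimes v z B C D) : B ≤ 4 * z := by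
  have h0 := h.v_pos
  have h1 : (1 + v) * (4 * z - B) = z * (1 - v) := by linarith [h.eqB, h.eqz]
  have h2 : 0 ≤ z * (1 - v) := mul_nonneg h.z_pos.le (by linarith [h.v_le])
  by_contra! hB
  nlinarith

/-- Player I is still on the nonnegative side when it turns at time `B`. -/
lemma pos_B (h : MeetingTimes v z B C D) : 0 ≤ v * z - v * (B - 3 * z) := by
  nlinarith [mul_nonneg h.v_pos.le (sub_nonneg.2 h.B_le)]

lemma B_lt_C (h : MeetingTimes v z B C D) : B < C := by
  have h0 := h.v_pos
  have h3 := h.z_pos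
  have h1 : (1 + v) * (C - B) = 1 + 6 * z - B - (v * z - v * (B - 3 * z)) := by
    linarith [h.eqC]
  have h2 : 0 < v * (B - 3 * z) := mul_pos h0 (by linarith [h.lt_B])
  have h4 : 0 < 1 + 6 * z - B - (v * z - v * (B - 3 * z)) := by
    linarith [h.B_le, h.eqz]
  by_contra! hC
  nlinarith

lemma pos_C (h : MeetingTimes v z B C D) :
    0 < v * z - v * (B - 3 * z) + v * (C - B) := by
  linarith [h.pos_B, mul_pos h.v_pos (sub_pos.2 h.B_lt_C)]

/-- By symmetry of the agents `(1, 1)` and `(-1, -1)`, the last gap at time `C` is twice the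
position of player I. -/
lemma gap_C (h : MeetingTimes v z B C D) :
    (1 + v) * (D - C) = 2 * (v * z - v * (B - 3 * z) + v * (C - B)) := by
  linarith [h.eqD, h.eqC]

lemma C_lt_D (h : MeetingTimes v z B C D) : C < D := by
  have h1 := h.gap_C
  have h2 := h.pos_C
  have h0 := h.v_pos
  by_contra! hD
  nlinarith

/-- The last agent walks over the marker before its rendezvous. -/
lemma marker_lt_D (h : MeetingTimes v z B C D) : 9 * z < D := by
  have h0 := h.v_pos
  have h1 := h.gap_C
  have h2 := h.pos_C
  have h3 := h.eqD
  have hvz := mul_pos h.v_pos h.z_pos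
  set x := v * z - v * (B - 3 * z) + v * (C - B)
  have h4 : (1 + v) * (x - v * (D - C)) = x * (1 - v) := by linear_combination (-v) * h1
  have h5 : 0 ≤ x * (1 - v) := mul_nonneg h2.le (by linarith [h.v_le])
  have h6 : 0 ≤ x - v * (D - C) := by
    by_contra! hD
    nlinarith
  linarith [h.eqz]

/-! ### The pieces of the trajectories -/

lemma f_1 {t : ℝ} (ht : t ≤ z) : zigzag v z B C t = -v * t := if_pos ht

lemma f_2 (h : MeetingTimes v z B C D) {t : ℝ} (h1 : z ≤ t) (h2 : t ≤ 3 * z) :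
    zigzag v z B C t = -v * z + v * (t - z) := by
  have := h.z_pos
  unfold zigzag
  split_ifs <;> first | rfl | (obtain rfl : t = z := by linarith); ring

lemma f_3 (h : MeetingTimes v z B C D) {t : ℝ} (h1 : 3 * z ≤ t) (h2 : t ≤ B) :
    zigzag v z B C t = v * z - v * (t - 3 * z) := by
  have := h.z_pos
  rcases h1.eq_or_lt with rfl | h1
  · rw [h.f_2 (by linarith) le_rfl]; ring
  · unfold zigzag
    rw [if_neg (by linarith), if_neg (by linarith), if_pos h2]

lemma f_4 (h : MeetingTimes v z B C D) {t : ℝ} (h1 : B ≤ t) (h2 : t ≤ C) :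
    zigzag v z B C t = v * z - v * (B - 3 * z) + v * (t - B) := by
  have := h.z_pos
  have := h.lt_B
  rcases h1.eq_or_lt with rfl | h1
  · rw [h.f_3 (by linarith) le_rfl]; ring
  · unfold zigzag
    rw [if_neg (by linarith), if_neg (by linarith), if_neg (by linarith), if_pos h2]

lemma f_5 (h : MeetingTimes v z B C D) {t : ℝ} (h1 : C ≤ t) :
    zigzag v z B C t = v * z - v * (B - 3 * z) + v * (C - B) - v * (t - C) := by
  have := h.z_pos
  have := h.lt_B
  have := h.B_lt_C
  rcases h1.eq_or_lt with rfl | h1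
  · rw [h.f_4 (by linarith) le_rfl]; ring
  · unfold zigzag
    rw [if_neg (by linarith), if_neg (by linarith), if_neg (by linarith), if_neg (by linarith)]

lemma f_z : zigzag v z B C z = -v * z := f_1 le_rfl

lemma g_1 {t : ℝ} (ht : t ≤ 3 * z) : turnBack z t = t := if_pos ht

lemma g_2 {t : ℝ} (ht : 3 * z ≤ t) : turnBack z t = 6 * z - t := by
  rcases ht.eq_or_lt with rfl | ht
  · rw [g_1 le_rfl]; ring
  · exact if_neg (by linarith)

lemma piecewiseLin_f (h : MeetingTimes v z B C D) :
    PiecewiseLin (Icc (-v) v) (zigzag v z B C) := by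
  have hv := h.v_pos
  have hz := h.z_pos
  have hB := h.lt_B
  have hC := h.B_lt_C
  refine ⟨by rw [f_1 hz.le]; ring, 4,
    fun | 0 => 0 | 1 => z | 2 => 3 * z | 3 => B | _ => C,
    fun | 0 => -v | 1 => v | 2 => -v | 3 => v | _ => -v, rfl, ?_, ?_, ?_, ?_⟩
  · intro i hi
    interval_cases i <;> simp only [] <;> linarith
  · intro i hi
    interval_cases i <;> constructor <;> simp only [] <;> linarith
  · intro i hi t h1 h2
    interval_cases i <;> simp only [] at h1 h2 ⊢
    · rw [f_1 h2, f_1 hz.le]; ring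
    · rw [h.f_2 h1 h2, f_z]
    · rw [h.f_3 h1 h2, h.f_3 le_rfl hB.le]; ring
    · rw [h.f_4 h1 h2, h.f_4 le_rfl hC.le]; ring
  · intro t ht
    simp only [] at ht ⊢
    rw [h.f_5 ht, h.f_5 le_rfl]; ring

lemma piecewiseLin_g (h : MeetingTimes v z B C D) :
    PiecewiseLin {-1, 1} (turnBack z) := by
  have hz := h.z_pos
  refine ⟨g_1 (by linarith), 1, fun | 0 => 0 | _ => 3 * z, fun | 0 => 1 | _ => -1,
    rfl, ?_, ?_, ?_, ?_⟩
  · intro i hi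
    interval_cases i
    simp only []
    linarith
  · intro i hi
    interval_cases i <;> simp
  · intro i hi t h1 h2
    interval_cases i
    simp only [] at h1 h2 ⊢
    rw [g_1 h2, g_1 (by linarith)]; ring
  · intro t ht
    simp only [] at ht ⊢
    rw [g_2 ht, g_2 le_rfl]; ring

/-! ### No rendezvous before the claimed times -/

lemma neg_vz_le_f (h : MeetingTimes v z B C D) {t : ℝ} (h1 : t ≤ 3 * z) :
    -v * z ≤ zigzag v z B C t := by
  have hv := h.v_pos
  rcases le_total t z with h2 | h2
  · rw [f_1 h2]; nlinarith
  · rw [h.f_2 h2 h1]; nlinarith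

lemma f_le_vz (h : MeetingTimes v z B C D) {t : ℝ} (h0 : 0 ≤ t) (h1 : t ≤ B) :
    zigzag v z B C t ≤ v * z := by
  have hv := h.v_pos
  have hvz := mul_pos hv h.z_pos
  rcases le_total t z with h2 | h2
  · rw [f_1 h2]; linarith [mul_nonneg hv.le h0]
  rcases le_total t (3 * z) with h3 | h3
  · rw [h.f_2 h2 h3]; nlinarith
  · rw [h.f_3 h3 h1]; nlinarith

lemma f_lt_agent₁ (h : MeetingTimes v z B C D) {t : ℝ} (h0 : 0 ≤ t) (h1 : t < 3 * z) :
    zigzag v z B C t < 1 + -1 * turnBack z t := by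
  rw [g_1 h1.le]
  linarith [h.f_le_vz h0 (by linarith [h.lt_B]), h.eqz]

lemma agent₂_lt_f (h : MeetingTimes v z B C D) {t : ℝ} (h1 : t < B) :
    -1 + t < zigzag v z B C t := by
  rcases lt_or_ge t (3 * z) with h2 | h2
  · linarith [h.neg_vz_le_f h2.le, h.eqz]
  · rw [h.f_3 h2 h1.le]
    linarith [h.eqB, mul_pos h.v_pos (sub_pos.2 h1)]

lemma f_lt_agent₃ (h : MeetingTimes v z B C D) {t : ℝ} (h0 : 0 ≤ t) (h1 : t < C) :
    zigzag v z B C t < 1 + 1 * turnBack z t := by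
  have hz := h.z_pos
  rcases le_total t B with h2 | h2
  · have h3 := h.f_le_vz h0 h2
    rcases le_total t (3 * z) with h4 | h4
    · rw [g_1 h4]; linarith [h.eqz]
    · rw [g_2 h4]; linarith [h.eqz, h.B_le]
  · rw [h.f_4 h2 h1.le, g_2 (by linarith [h.lt_B])]
    linarith [h.eqC, mul_pos h.v_pos (sub_pos.2 h1)]

lemma agent₄_lt_f (h : MeetingTimes v z B C D) {t : ℝ} (h0 : 0 ≤ t) (h1 : t < D) :
    -1 + -1 * turnBack z t < zigzag v z B C t := by
  have hz := h.z_pos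
  have hv := h.v_pos
  have hB := h.lt_B
  rcases le_total t (3 * z) with h2 | h2
  · rw [g_1 h2]
    linarith [h.neg_vz_le_f h2, h.eqz]
  rw [g_2 h2]
  rcases le_total t B with h3 | h3
  · rw [h.f_3 h2 h3]
    linarith [h.B_le, h.pos_B, mul_nonneg hv.le (sub_nonneg.2 h3)]
  rcases le_total t C with h4 | h4
  · rw [h.f_4 h3 h4]
    -- the gap shrinks at rate `1 - v ≥ 0` and is still positive at time `C`
    linarith [h.pos_C, h.eqC, mul_nonneg (sub_nonneg.2 h.v_le) (sub_nonneg.2 h4)]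
  · rw [h.f_5 h4]
    linarith [h.eqD, mul_pos hv (sub_pos.2 h1)]

/-! ### The rendezvous -/

lemma meet₁ (h : MeetingTimes v z B C D) :
    zigzag v z B C (3 * z) = 1 + -1 * turnBack z (3 * z) := by
  rw [h.f_3 le_rfl h.lt_B.le, g_1 le_rfl]
  linarith [h.eqz]

lemma meet₂ (h : MeetingTimes v z B C D) : zigzag v z B C B = -1 + B := by
  rw [h.f_3 h.lt_B.le le_rfl, h.eqB]

lemma meet₃ (h : MeetingTimes v z B C D) :
    zigzag v z B C C = 1 + 1 * turnBack z C := by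
  rw [h.f_4 h.B_lt_C.le le_rfl, g_2 (by linarith [h.lt_B, h.B_lt_C])]
  linarith [h.eqC]

lemma meet₄ (h : MeetingTimes v z B C D) :
    zigzag v z B C D = -1 + -1 * turnBack z D := by
  rw [h.f_5 h.C_lt_D.le, g_2 (by linarith [h.lt_B, h.B_lt_C, h.C_lt_D])]
  linarith [h.eqD]

lemma path₁ : agentPath z 1 (-1) = fun t => 1 + -1 * turnBack z t := by
  funext t; unfold agentPath; rw [if_neg (by norm_num)]

lemma path₂ : agentPath z (-1) 1 = fun t => -1 + t := by
  funext t; unfold agentPath; rw [if_pos (by norm_num)]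

lemma path₃ : agentPath z 1 1 = fun t => 1 + 1 * turnBack z t := by
  funext t; unfold agentPath; rw [if_neg (by norm_num)]

lemma path₄ : agentPath z (-1) (-1) = fun t => -1 + -1 * turnBack z t := by
  funext t; unfold agentPath; rw [if_neg (by norm_num)]

lemma traj₁ (h : MeetingTimes v z B C D) :
    AgentTraj (zigzag v z B C) (turnBack z) z 1 1 (-1) (agentPath z 1 (-1)) := by
  refine Or.inl ⟨fun t => by rw [path₁], ?_⟩
  rintro ⟨τ, -, hm, hr⟩
  rw [f_z] at hm
  have hvz := mul_pos h.v_pos h.z_pos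
  rcases le_or_gt τ (3 * z) with h1 | h1
  · rw [g_1 h1] at hm
    linarith [h.eqz]
  · exact hr _ (by linarith [h.z_pos]) h1 h.meet₁

lemma traj₃ (h : MeetingTimes v z B C D) :
    AgentTraj (zigzag v z B C) (turnBack z) z 1 1 1 (agentPath z 1 1) := by
  refine Or.inl ⟨fun t => by rw [path₃], ?_⟩
  rintro ⟨τ, hτ, hm, hr⟩
  rw [f_z] at hm
  have hz := h.z_pos
  have hvz := mul_pos h.v_pos hz
  have hB := h.lt_B
  have hC := h.B_lt_C
  rcases le_or_gt τ C with h1 | h1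
  · rcases le_total τ (3 * z) with h2 | h2
    · rw [g_1 h2] at hm
      linarith
    · rw [g_2 h2] at hm
      linarith [h.eqC, h.pos_C]
  · exact hr _ (by linarith) h1 h.meet₃

lemma traj₂ (h : MeetingTimes v z B C D) :
    AgentTraj (zigzag v z B C) (turnBack z) z 1 (-1) 1 (agentPath z (-1) 1) := by
  have hz := h.z_pos
  have hB := h.lt_B
  refine Or.inr ⟨3 * z, 1, 1, by linarith, ?_, ?_, ?_, ?_, Or.inl rfl, fun _ => rfl,
    fun hc => by linarith, ?_, ?_⟩
  · rw [g_1 le_rfl, f_z]; linarith [h.eqz]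
  · intro t _ h1
    have := h.agent₂_lt_f (h1.trans hB)
    rw [g_1 h1.le]
    exact fun hc => by linarith
  · intro t _ h1
    rw [g_1 h1.le, f_z]
    exact fun hc => by linarith [h.eqz]
  · refine fun _ => ⟨1, one_pos, fun s _ hs => ?_⟩
    rw [g_1 hs, g_1 le_rfl]; ring
  · intro t _ ht
    rw [path₂, g_1 ht]; ring
  · intro t _
    rw [path₂, g_1 le_rfl]; ring

/-- The agent `(-1, -1)` finds the marker at time `9 * z`, while already moving to the right,
so that its trajectory is unaffected. -/
lemma traj₄ (h : MeetingTimes v z B C D) :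
    AgentTraj (zigzag v z B C) (turnBack z) z 1 (-1) (-1) (agentPath z (-1) (-1)) := by
  have hz := h.z_pos
  have hvz := mul_pos h.v_pos hz
  refine Or.inr ⟨9 * z, 1, 1, by linarith, ?_, ?_, ?_, ?_, Or.inl rfl, fun _ => rfl,
    fun hc => by linarith, ?_, ?_⟩
  · rw [g_2 (by linarith), f_z]; linarith [h.eqz]
  · intro t h0 h1
    exact (h.agent₄_lt_f h0 (h1.trans h.marker_lt_D)).ne'
  · intro t h0 h1 hc
    rw [f_z] at hc
    rcases le_total t (3 * z) with h2 | h2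
    · rw [g_1 h2] at hc; linarith [h.eqz]
    · rw [g_2 h2] at hc; linarith [h.eqz]
  · refine fun _ => ⟨6 * z, by linarith, fun s h1 _ => ?_⟩
    rw [g_2 (by linarith), g_2 (by linarith)]; ring
  · intro t _ _
    rw [path₄]
  · intro t ht
    simp only [path₄]
    rw [g_2 (by linarith : 3 * z ≤ t), g_2 (by linarith)]; ring

lemma profile (h : MeetingTimes v z B C D) :
    MarkerProfile (Icc (-v) v) {-1, 1} 1 (zigzag v z B C) (turnBack z) z (agentPath z) := by
  have hz := h.z_pos
  have hB := h.lt_B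
  have hC := h.B_lt_C
  have hD := h.C_lt_D
  refine ⟨h.piecewiseLin_f, h.piecewiseLin_g, hz.le, ?_⟩
  rintro o b (rfl | rfl) (rfl | rfl)
  · exact ⟨h.traj₃, C, by linarith, by rw [path₃]; exact h.meet₃⟩
  · exact ⟨h.traj₁, 3 * z, by linarith, by rw [path₁]; exact h.meet₁⟩
  · exact ⟨h.traj₂, B, by linarith, by rw [path₂]; exact h.meet₂⟩
  · exact ⟨h.traj₄, D, by linarith, by rw [path₄]; exact h.meet₄⟩

end MeetingTimes

lemma rdvTime_eq {f p : ℝ → ℝ} {T : ℝ} (h0 : 0 ≤ T) (hT : f T = p T)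
    (hne : ∀ t, 0 ≤ t → t < T → f t ≠ p t) : rdvTime f p = T := by
  refine IsLeast.csInf_eq ⟨⟨h0, hT⟩, ?_⟩
  rintro t ⟨ht, hft⟩
  by_contra! hlt
  exact hne t ht hlt hft

lemma rdvTime_nonneg (f p : ℝ → ℝ) : 0 ≤ rdvTime f p :=
  Real.sInf_nonneg fun _ ht => ht.1

namespace MeetingTimes

variable {v z B C D : ℝ}

lemma rdv₁ (h : MeetingTimes v z B C D) :
    rdvTime (zigzag v z B C) (agentPath z 1 (-1)) = 3 * z := by
  rw [path₁]
  exact rdvTime_eq (by linarith [h.z_pos]) h.meet₁ fun t h0 h1 => (h.f_lt_agent₁ h0 h1).ne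

lemma rdv₂ (h : MeetingTimes v z B C D) :
    rdvTime (zigzag v z B C) (agentPath z (-1) 1) = B := by
  rw [path₂]
  exact rdvTime_eq (by linarith [h.z_pos, h.lt_B]) h.meet₂
    fun t _ h1 => (h.agent₂_lt_f h1).ne'

lemma rdv₃ (h : MeetingTimes v z B C D) :
    rdvTime (zigzag v z B C) (agentPath z 1 1) = C := by
  rw [path₃]
  exact rdvTime_eq (by linarith [h.z_pos, h.lt_B, h.B_lt_C]) h.meet₃
    fun t h0 h1 => (h.f_lt_agent₃ h0 h1).ne

lemma rdv₄ (h : MeetingTimes v z B C D) :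
    rdvTime (zigzag v z B C) (agentPath z (-1) (-1)) = D := by
  rw [path₄]
  exact rdvTime_eq (by linarith [h.z_pos, h.lt_B, h.B_lt_C, h.C_lt_D]) h.meet₄
    fun t h0 h1 => (h.agent₄_lt_f h0 h1).ne'

lemma Vm_le (h : MeetingTimes v z B C D) : Vm v ≤ 3 * z + B + C + D := by
  refine csInf_le ⟨0, ?_⟩ ⟨_, _, _, _, h.profile, ?_⟩
  · rintro _ ⟨f, g, z, p, -, rfl⟩
    unfold markerSum
    have := rdvTime_nonneg f
    linarith [this (p 1 1), this (p 1 (-1)), this (p (-1) 1), this (p (-1) (-1))]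
  · unfold markerSum
    rw [h.rdv₁, h.rdv₂, h.rdv₃, h.rdv₄]; ring

end MeetingTimes

/-- The closed forms of the rendezvous times solve the meeting equations. -/
lemma meetingTimes_closedForm {v : ℝ} (hv0 : 0 < v) (hv1 : v ≤ 1) :
    MeetingTimes v (1 / (v + 3)) ((5 * v + 3) / ((v + 1) * (v + 3)))
      ((7 * v ^ 2 + 12 * v + 9) / ((v + 1) ^ 2 * (v + 3)))
      ((9 * v ^ 3 + 27 * v ^ 2 + 35 * v + 9) / ((v + 1) ^ 3 * (v + 3))) := by
  have h3 : v + 3 ≠ 0 := by positivity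
  have h1 : v + 1 ≠ 0 := by positivity
  constructor
  · exact hv0
  · exact hv1
  all_goals field_simp
  all_goals ring

/-- Upper bound for the slow-player marker game: there is a strategy with drop time
`z = 1/(v+3)` whose rendezvous times, in increasing order, are exactly `3/(v+3)`,
`(5v+3)/((v+1)(v+3))`, `(7v²+12v+9)/((v+1)²(v+3))` and `(9v³+27v²+35v+9)/((v+1)³(v+3))`,
in which the slow player always moves at maximal speed with direction pattern
`(-v, +v, -v, +v)` and the marker is found by an agent exactly at the first rendezvous
time `3/(v+3)`; consequently `Vm v ≤ (24v³+68v²+76v+24)/((v+1)³(v+3))`. -/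
theorem slow_marker_game_upper_bound (v : ℝ) (hv0 : 0 < v) (hv1 : v ≤ 1) :
    (∃ f g z p, MarkerProfile (Icc (-v) v) {-1, 1} 1 f g z p ∧
      z = 1 / (v + 3) ∧
      ({rdvTime f (p 1 1), rdvTime f (p 1 (-1)),
          rdvTime f (p (-1) 1), rdvTime f (p (-1) (-1))} : Multiset ℝ) =
        {3 / (v + 3), (5 * v + 3) / ((v + 1) * (v + 3)),
          (7 * v ^ 2 + 12 * v + 9) / ((v + 1) ^ 2 * (v + 3)),
          (9 * v ^ 3 + 27 * v ^ 2 + 35 * v + 9) / ((v + 1) ^ 3 * (v + 3))} ∧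
      (∀ s, 0 ≤ s → s ≤ z → f s = -v * s) ∧
      (∀ s, z ≤ s → s ≤ 3 / (v + 3) → f s = f z + v * (s - z)) ∧
      (∀ s, 3 / (v + 3) ≤ s → s ≤ (5 * v + 3) / ((v + 1) * (v + 3)) →
        f s = f (3 / (v + 3)) - v * (s - 3 / (v + 3))) ∧
      (∀ s, (5 * v + 3) / ((v + 1) * (v + 3)) ≤ s →
        s ≤ (7 * v ^ 2 + 12 * v + 9) / ((v + 1) ^ 2 * (v + 3)) →
        f s = f ((5 * v + 3) / ((v + 1) * (v + 3))) +
          v * (s - (5 * v + 3) / ((v + 1) * (v + 3)))) ∧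
      (∃ d4 : ℝ, (d4 = v ∨ d4 = -v) ∧
        ∀ s, (7 * v ^ 2 + 12 * v + 9) / ((v + 1) ^ 2 * (v + 3)) ≤ s →
          s ≤ (9 * v ^ 3 + 27 * v ^ 2 + 35 * v + 9) / ((v + 1) ^ 3 * (v + 3)) →
          f s = f ((7 * v ^ 2 + 12 * v + 9) / ((v + 1) ^ 2 * (v + 3))) +
            d4 * (s - (7 * v ^ 2 + 12 * v + 9) / ((v + 1) ^ 2 * (v + 3)))) ∧
      (∃ o b : ℝ, (o = 1 ∨ o = -1) ∧ (b = 1 ∨ b = -1) ∧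
        o + b * g (3 / (v + 3)) = f z ∧
        ∀ t, z ≤ t → t < 3 / (v + 3) → o + b * g t ≠ f z)) ∧
    Vm v ≤ (24 * v ^ 3 + 68 * v ^ 2 + 76 * v + 24) / ((v + 1) ^ 3 * (v + 3)) := by
  have h := meetingTimes_closedForm hv0 hv1
  have h3z : 3 / (v + 3) = 3 * (1 / (v + 3)) := by ring
  have hsum : (24 * v ^ 3 + 68 * v ^ 2 + 76 * v + 24) / ((v + 1) ^ 3 * (v + 3)) =
      3 * (1 / (v + 3)) + (5 * v + 3) / ((v + 1) * (v + 3)) +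
      (7 * v ^ 2 + 12 * v + 9) / ((v + 1) ^ 2 * (v + 3)) +
      (9 * v ^ 3 + 27 * v ^ 2 + 35 * v + 9) / ((v + 1) ^ 3 * (v + 3)) := by
    have h3 : v + 3 ≠ 0 := by positivity
    have h1 : v + 1 ≠ 0 := by positivity
    field_simp
    ring
  rw [hsum, h3z]
  -- from here on only the meeting equations matter
  generalize 1 / (v + 3) = z at *
  generalize (5 * v + 3) / ((v + 1) * (v + 3)) = B at *
  generalize (7 * v ^ 2 + 12 * v + 9) / ((v + 1) ^ 2 * (v + 3)) = C at *
  generalize (9 * v ^ 3 + 27 * v ^ 2 + 35 * v + 9) / ((v + 1) ^ 3 * (v + 3)) = D at *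
  have hz := h.z_pos
  have hB := h.lt_B
  have hC := h.B_lt_C
  refine ⟨⟨zigzag v z B C, turnBack z, z, agentPath z, h.profile, rfl, ?_, ?_, ?_, ?_, ?_,
    ⟨-v, Or.inr rfl, ?_⟩, ⟨-1, 1, Or.inr rfl, Or.inl rfl, ?_, ?_⟩⟩, h.Vm_le⟩
  · rw [h.rdv₁, h.rdv₂, h.rdv₃, h.rdv₄]
    simp only [Multiset.insert_eq_cons]
    rw [Multiset.cons_swap C, Multiset.cons_swap C]
  · exact fun s _ hs => MeetingTimes.f_1 hs
  · intro s h1 h2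
    rw [h.f_2 h1 h2, MeetingTimes.f_z]
  · intro s h1 h2
    rw [h.f_3 h1 h2, h.f_3 le_rfl hB.le]; ring
  · intro s h1 h2
    rw [h.f_4 h1 h2, h.f_4 le_rfl hC.le]; ring
  · intro s h1 _
    rw [h.f_5 h1, h.f_5 le_rfl]; ring
  · rw [MeetingTimes.g_1 le_rfl, MeetingTimes.f_z]
    linarith [h.eqz]
  · intro t _ ht hc
    rw [MeetingTimes.g_1 ht.le, MeetingTimes.f_z] at hc
    linarith [h.eqz]
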